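/- arXiv:1811.04429 — 3 statements merged into one kernel-verified Lean document; each statement's English description precedes it below -/
import Mathlib

section
/- Let G be a finite simple chordal graph and let B be an induced complete bipartite subgraph of G with parts B_X = {x} and B_Y = {y_1,...,y_k}. Then the sets M_1(B_X) and M_1(B_Y) are disjoint and nonadjacent (no vertex of M_1(B_X) is equal or adjacent to a vertex of M_1(B_Y)). -/
open SimpleGraph

/-- `N₁(S)`: the set of vertices at distance exactly 1 from the vertex set `S`. -/
def nOne {V : Type*} (G : SimpleGraph V) (S : Set V) : Set V :=
  {v | v ∉ S ∧ ∃ s ∈ S, G.Adj v s}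

/-- `N₂(S)`: the set of vertices at distance exactly 2 from the vertex set `S`. -/
def nTwo {V : Type*} (G : SimpleGraph V) (S : Set V) : Set V :=
  {v | v ∉ S ∧ (∀ s ∈ S, ¬ G.Adj v s) ∧ ∃ u, G.Adj v u ∧ ∃ s ∈ S, G.Adj u s}

/-- A graph is chordal if every induced cycle is a triangle, i.e. it has no
induced cycle of length at least 4. -/
def IsChordal {V : Type*} (G : SimpleGraph V) : Prop :=
  ∀ n : ℕ, 4 ≤ n → ∀ s : Set V, IsEmpty (G.induce s ≃g cycleGraph n)

/-- A set of vertices is independent if its elements are pairwise nonadjacent. -/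
def IsIndepSet {V : Type*} (G : SimpleGraph V) (S : Set V) : Prop :=
  S.Pairwise fun a b => ¬ G.Adj a b

/-- `B` is an induced complete bipartite subgraph of `G` with parts `B_X = {x}` and
`B_Y = Y`: `Y` is a nonempty independent set not containing `x`, and `x` is adjacent
to every vertex of `Y`. -/
def IsInducedStar {V : Type*} (G : SimpleGraph V) (x : V) (Y : Set V) : Prop :=
  Y.Nonempty ∧ x ∉ Y ∧ (∀ y ∈ Y, G.Adj x y) ∧ ∀ y₁ ∈ Y, ∀ y₂ ∈ Y, ¬ G.Adj y₁ y₂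

/-- `M₁(B_X) = N₁(B_X) ∩ N₂(B_Y)` where `B_X = {x}` and `B_Y = Y`. -/
def M1X {V : Type*} (G : SimpleGraph V) (x : V) (Y : Set V) : Set V :=
  nOne G {x} ∩ nTwo G Y

/-- `M₁(B_Y) = N₁(B_Y) ∩ N₂(B_X)`. -/
def M1Y {V : Type*} (G : SimpleGraph V) (x : V) (Y : Set V) : Set V :=
  nOne G Y ∩ nTwo G {x}

/-- `M₂(B_X) = N₁(M₁(B_X)) ∩ N₂(B_X)`. -/
def M2X {V : Type*} (G : SimpleGraph V) (x : V) (Y : Set V) : Set V :=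
  nOne G (M1X G x Y) ∩ nTwo G {x}

/-- `M₂(B_Y) = N₁(M₁(B_Y)) ∩ N₂(B_Y)`. -/
def M2Y {V : Type*} (G : SimpleGraph V) (x : V) (Y : Set V) : Set V :=
  nOne G (M1Y G x Y) ∩ nTwo G Y

/-- `M₁(B) = M₁(B_X) ∪ M₁(B_Y)`. -/
def M1B {V : Type*} (G : SimpleGraph V) (x : V) (Y : Set V) : Set V :=
  M1X G x Y ∪ M1Y G x Y

/-- `M₂(B) = M₂(B_X) ∪ M₂(B_Y)`. -/
def M2B {V : Type*} (G : SimpleGraph V) (x : V) (Y : Set V) : Set V :=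
  M2X G x Y ∪ M2Y G x Y

/-- `M₁(B_X)` and `M₁(B_Y)` are disjoint and nonadjacent. -/
theorem stmt1 {V : Type*} (G : SimpleGraph V) (hG : IsChordal G)
    (x : V) (Y : Set V) (hB : IsInducedStar G x Y) :
    Disjoint (M1X G x Y) (M1Y G x Y) ∧
      ∀ a ∈ M1X G x Y, ∀ b ∈ M1Y G x Y, ¬ G.Adj a b := by
  obtain ⟨-, -, hxY, -⟩ := hB
  have key : ∀ a ∈ M1X G x Y, ∀ b ∈ M1Y G x Y, ¬ G.Adj a b := by
    rintro a ⟨⟨hax, s, hs, has⟩, haY, hna, -⟩ b ⟨⟨hbY, y, hy, hby⟩, hbx, hnb, -⟩ hab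
    obtain rfl : s = x := hs
    have hxy := hxY y hy
    have hay := hna y hy
    have hbs := hnb s rfl
    have hbx' : b ≠ s := hbx
    have hay' : a ≠ y := fun h => haY (h ▸ hy)
    let f : Fin 4 → V := ![a, s, y, b]
    have hadj : ∀ i j, G.Adj (f i) (f j) ↔ (cycleGraph 4).Adj i j := by
      intro i j
      have e1 := has.symm
      have e2 := hxy.symm
      have e3 := hby.symm
      have e4 := hab.symm
      have e5 : ¬ G.Adj y a := fun h => hay h.symm
      have e6 : ¬ G.Adj s b := fun h => hbs h.symm
      fin_cases i <;> fin_cases j <;>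
        simp [f, cycleGraph_adj, *] <;> decide
    have hinj : Function.Injective f := by
      intro i j hij
      have n1 := has.ne
      have n2 := hxy.ne
      have n3 := hby.ne
      have n4 := hab.ne
      fin_cases i <;> fin_cases j <;> simp_all [f]
    exact (hG 4 le_rfl (Set.range f)).false
      (RelIso.symm ⟨Equiv.ofInjective f hinj, fun {i j} => hadj i j⟩)
  refine ⟨Set.disjoint_left.2 ?_, key⟩
  rintro a ⟨-, -, hna, -⟩ ⟨⟨-, y, hy, hay⟩, -⟩
  exact hna y hy hay
end

section
/- Let G be a finite simple chordal graph and let B be an induced complete bipartite subgraph of G with parts B_X = {x} and B_Y = {y_1,...,y_k}. Then the sets M_2(B_X) and M_2(B_Y) are disjoint and nonadjacent. -/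
open SimpleGraph

theorem emb_false {V : Type*} {G : SimpleGraph V} (hG : IsChordal G) (n : ℕ) (hn : 4 ≤ n)
    (f : Fin n → V) (hf : Function.Injective f)
    (h : ∀ i j, G.Adj (f i) (f j) ↔ (cycleGraph n).Adj i j) : False := by
  refine (hG n hn (Set.range f)).false ?_
  refine RelIso.symm ⟨Equiv.ofInjective f hf, ?_⟩
  intro i j
  simpa using h i j

theorem no_c4 {V : Type*} {G : SimpleGraph V} (hG : IsChordal G) {a b c d : V}
    (h1 : G.Adj a b) (h2 : G.Adj b c) (h3 : G.Adj c d) (h4 : G.Adj d a)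
    (hac : a ≠ c) (hbd : b ≠ d) (k1 : ¬ G.Adj a c) (k2 : ¬ G.Adj b d) : False := by
  have := h1.ne; have := h2.ne; have := h3.ne; have := h4.ne
  refine emb_false hG 4 le_rfl ![a, b, c, d] ?_ ?_
  · intro i j
    fin_cases i <;> fin_cases j <;> simp <;> grind
  · intro i j
    fin_cases i <;> fin_cases j <;> simp [cycleGraph_adj] <;> first | grind [G.adj_comm] | (simp [G.adj_comm, *] <;> decide)

theorem no_c5 {V : Type*} {G : SimpleGraph V} (hG : IsChordal G) {a b c d e : V}
    (h1 : G.Adj a b) (h2 : G.Adj b c) (h3 : G.Adj c d) (h4 : G.Adj d e) (h5 : G.Adj e a)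
    (k1 : ¬ G.Adj a c) (k2 : ¬ G.Adj a d) (k3 : ¬ G.Adj b d) (k4 : ¬ G.Adj b e)
    (k5 : ¬ G.Adj c e) : False := by
  have := h1.ne; have := h2.ne; have := h3.ne; have := h4.ne; have := h5.ne
  have : a ≠ c := by rintro rfl; exact k5 h5.symm
  have : a ≠ d := by rintro rfl; exact k1 h3.symm
  have : b ≠ d := by rintro rfl; exact k4 h4
  have : b ≠ e := by rintro rfl; exact k5 h2.symm
  have : c ≠ e := by rintro rfl; exact k1 h5.symm
  refine emb_false hG 5 (by norm_num) ![a, b, c, d, e] ?_ ?_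
  · intro i j
    fin_cases i <;> fin_cases j <;> simp <;> grind
  · intro i j
    fin_cases i <;> fin_cases j <;> simp [cycleGraph_adj] <;> first | grind [G.adj_comm] | (simp [G.adj_comm, *] <;> decide)

theorem no_c6 {V : Type*} {G : SimpleGraph V} (hG : IsChordal G) {a b c d e f : V}
    (h1 : G.Adj a b) (h2 : G.Adj b c) (h3 : G.Adj c d) (h4 : G.Adj d e) (h5 : G.Adj e f)
    (h6 : G.Adj f a)
    (k1 : ¬ G.Adj a c) (k2 : ¬ G.Adj a d) (k3 : ¬ G.Adj a e) (k4 : ¬ G.Adj b d)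
    (k5 : ¬ G.Adj b e) (k6 : ¬ G.Adj b f) (k7 : ¬ G.Adj c e) (k8 : ¬ G.Adj c f)
    (k9 : ¬ G.Adj d f) : False := by
  have := h1.ne; have := h2.ne; have := h3.ne; have := h4.ne; have := h5.ne; have := h6.ne
  have : a ≠ c := by rintro rfl; exact k8 h6.symm
  have : a ≠ d := by rintro rfl; exact k1 h3.symm
  have : a ≠ e := by rintro rfl; exact k2 h4.symm
  have : b ≠ d := by rintro rfl; exact k5 h4
  have : b ≠ e := by rintro rfl; exact k6 h5
  have : b ≠ f := by rintro rfl; exact k8 h2.symm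
  have : c ≠ e := by rintro rfl; exact k8 h5
  have : c ≠ f := by rintro rfl; exact k1 h6.symm
  have : d ≠ f := by rintro rfl; exact k2 h6.symm
  refine emb_false hG 6 (by norm_num) ![a, b, c, d, e, f] ?_ ?_
  · intro i j
    fin_cases i <;> fin_cases j <;> simp <;> grind
  · intro i j
    fin_cases i <;> fin_cases j <;> simp [cycleGraph_adj] <;> first | grind [G.adj_comm] | (simp [G.adj_comm, *] <;> decide)

/-- `M₂(B_X)` and `M₂(B_Y)` are disjoint and nonadjacent. -/
theorem stmt2 {V : Type*} (G : SimpleGraph V) (hG : IsChordal G)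
    (x : V) (Y : Set V) (hB : IsInducedStar G x Y) :
    Disjoint (M2X G x Y) (M2Y G x Y) ∧
      ∀ a ∈ M2X G x Y, ∀ b ∈ M2Y G x Y, ¬ G.Adj a b := by
  obtain ⟨-, -, hxY, -⟩ := hB
  have key : ∀ a ∈ M2X G x Y, ∀ b ∈ M2Y G x Y, ∃ u w y, G.Adj a u ∧ G.Adj u x ∧ G.Adj x y ∧
      G.Adj y w ∧ G.Adj w b ∧ ¬ G.Adj u y ∧ ¬ G.Adj u w ∧ ¬ G.Adj x w ∧ ¬ G.Adj a x ∧
      ¬ G.Adj b y ∧ a ≠ x ∧ b ≠ y ∧ u ≠ y ∧ w ≠ x := by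
    rintro a ⟨⟨-, u, ⟨⟨-, x', hx', hux⟩, huY, huY', -⟩, hau⟩, hax, hax', -⟩
      b ⟨⟨-, w, ⟨⟨hwY, y, hy, hwy⟩, hwx, hwx', -⟩, hbw⟩, hbY, hbY', -⟩
    have hxx : x' = x := hx'
    subst hxx
    have hwx2 := hwx' x' rfl
    have huy : u ≠ y := fun h => huY (h ▸ hy)
    refine ⟨u, w, y, hau, hux, hxY y hy, hwy.symm, hbw.symm, huY' y hy, ?_,
      fun h => hwx2 h.symm, hax' x' rfl, hbY' y hy, hax, fun h => hbY (h ▸ hy), huy, hwx⟩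
    intro huw
    exact no_c4 hG hux (hxY y hy) hwy.symm huw.symm huy (Ne.symm hwx) (huY' y hy)
      fun h => hwx2 h.symm
  constructor
  · rw [Set.disjoint_left]
    intro a ha hb
    obtain ⟨u, w, y, hau, hux, hxy, hyw, hwb, nuy, nuw, nxw, nax, nby, -⟩ := key a ha a hb
    exact no_c5 hG hux hxy hyw hwb hau nuy nuw nxw (fun h => nax h.symm) (fun h => nby h.symm)
  · intro a ha b hb hab
    obtain ⟨u, w, y, hau, hux, hxy, hyw, hwb, nuy, nuw, nxw, nax, nby, ax, bY, uy, wx⟩ :=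
      key a ha b hb
    have nxa : ¬ G.Adj x a := fun h => nax h.symm
    have nyb : ¬ G.Adj y b := fun h => nby h.symm
    have nya : ¬ G.Adj y a := fun h => no_c4 hG hux hxy h hau uy ax.symm nuy nxa
    have nxb : ¬ G.Adj x b := fun h => no_c4 hG hxy hyw hwb h.symm wx.symm bY.symm nxw nyb
    have nwa : ¬ G.Adj w a := fun h => no_c5 hG hux hxy hyw h hau nuy nuw nxw nxa nya
    have nub : ¬ G.Adj u b := fun h => no_c5 hG hux hxy hyw hwb h.symm nuy nuw nxw nxb nyb
    exact no_c6 hG hux hxy hyw hwb hab.symm hau nuy nuw nub nxw nxb nxa nyb nya nwa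
end

section
/- Let G be a finite simple chordal graph and let B be an induced complete bipartite subgraph of G with parts B_X = {x} and B_Y = {y_1,...,y_k}. Then for all 1 ≤ i < j ≤ k, the sets M_1(y_i) and M_1(y_j) are disjoint and nonadjacent. -/
open SimpleGraph

/-- `M₁(y) = N₁(y) ∩ N₂(B_X)` where `B_X = {x}`. -/
def M1y {V : Type*} (G : SimpleGraph V) (x : V) (y : V) : Set V :=
  nOne G {y} ∩ nTwo G {x}

theorem no_cycle_emb {V : Type*} (G : SimpleGraph V) (hG : IsChordal G) (n : ℕ) (hn : 4 ≤ n)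
    (f : Fin n → V) (hf : Function.Injective f)
    (h : ∀ i j, G.Adj (f i) (f j) ↔ (cycleGraph n).Adj i j) : False := by
  refine (hG n hn (Set.range f)).false (RelIso.symm ⟨Equiv.ofInjective f hf, ?_⟩)
  intro i j
  simpa using h i j

theorem no_four {V : Type*} (G : SimpleGraph V) (hG : IsChordal G) (a b c d : V)
    (hab : G.Adj a b) (hbc : G.Adj b c) (hcd : G.Adj c d) (hda : G.Adj d a)
    (hac : ¬ G.Adj a c) (hbd : ¬ G.Adj b d) (hac' : a ≠ c) (hbd' : b ≠ d) : False := by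
  have := hab.ne
  have := hbc.ne
  have := hcd.ne
  have := hda.ne
  refine no_cycle_emb G hG 4 le_rfl ![a, b, c, d] ?_ ?_
  · intro i j
    fin_cases i <;> fin_cases j <;> simp <;> grind
  · intro i j
    fin_cases i <;> fin_cases j <;> simp [cycleGraph_adj, G.adj_comm, *] <;> grind [G.adj_comm]

theorem no_five {V : Type*} (G : SimpleGraph V) (hG : IsChordal G) (a b c d e : V)
    (hab : G.Adj a b) (hbc : G.Adj b c) (hcd : G.Adj c d) (hde : G.Adj d e) (hea : G.Adj e a)
    (hac : ¬ G.Adj a c) (had : ¬ G.Adj a d) (hbd : ¬ G.Adj b d) (hbe : ¬ G.Adj b e)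
    (hce : ¬ G.Adj c e) (hac' : a ≠ c) (had' : a ≠ d) (hbd' : b ≠ d) (hbe' : b ≠ e)
    (hce' : c ≠ e) : False := by
  have := hab.ne
  have := hbc.ne
  have := hcd.ne
  have := hde.ne
  have := hea.ne
  refine no_cycle_emb G hG 5 (by norm_num) ![a, b, c, d, e] ?_ ?_
  · intro i j
    fin_cases i <;> fin_cases j <;> simp <;> grind
  · intro i j
    fin_cases i <;> fin_cases j <;> simp [cycleGraph_adj, G.adj_comm, *] <;> grind [G.adj_comm]

/-- For distinct `yᵢ, yⱼ ∈ B_Y`, the sets `M₁(yᵢ)` and `M₁(yⱼ)` are disjoint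
and nonadjacent. -/
theorem stmt3 {V : Type*} (G : SimpleGraph V) (hG : IsChordal G)
    (x : V) (Y : Set V) (hB : IsInducedStar G x Y)
    (yi yj : V) (hyi : yi ∈ Y) (hyj : yj ∈ Y) (hne : yi ≠ yj) :
    Disjoint (M1y G x yi) (M1y G x yj) ∧
      ∀ a ∈ M1y G x yi, ∀ b ∈ M1y G x yj, ¬ G.Adj a b := by
  obtain ⟨-, hxY, hadj, hind⟩ := hB
  have key : ∀ a, a ≠ x → ¬ G.Adj a x → G.Adj a yi → G.Adj a yj → False := by
    intro a h1 h2 h3 h4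
    exact no_four G hG x yi a yj (hadj _ hyi) h3.symm h4 (hadj _ hyj).symm
      (fun h => h2 h.symm) (hind _ hyi _ hyj) h1.symm hne
  have e : ∀ y a, a ∈ M1y G x y → a ≠ x ∧ ¬ G.Adj a x ∧ G.Adj a y := by
    intro y a ha
    simp only [M1y, nOne, nTwo, Set.mem_inter_iff, Set.mem_setOf_eq, Set.mem_singleton_iff,
      exists_eq_left, forall_eq] at ha
    exact ⟨ha.2.1, ha.2.2.1, ha.1.2⟩
  refine ⟨Set.disjoint_left.2 fun a ha hb => ?_, fun a ha b hb hab => ?_⟩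
  · obtain ⟨h1, h2, h3⟩ := e _ _ ha
    exact key a h1 h2 h3 (e _ _ hb).2.2
  · obtain ⟨a1, a2, a3⟩ := e _ _ ha
    obtain ⟨b1, b2, b3⟩ := e _ _ hb
    refine no_five G hG x yi a b yj (hadj _ hyi) a3.symm hab b3 (hadj _ hyj).symm
      (fun h => a2 h.symm) (fun h => b2 h.symm) (fun h => key b b1 b2 h.symm b3)
      (hind _ hyi _ hyj) (fun h => key a a1 a2 a3 h) a1.symm b1.symm ?_ hne ?_
    · rintro rfl
      exact b2 (hadj _ hyi).symm
    · rintro rfl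
      exact a2 (hadj _ hyj).symm
end
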